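/- Let η ∈ (−1,0), T > 0, and let r ≥ 1 be an integer. Let u₀ ∈ 𝒮′(ℝ) be 1-periodic (invariant under translation by 1) with ‖u₀‖_{C^η} := sup { λ^{−η} |⟨u₀, φ_x^λ⟩| : φ ∈ B^r_0, x ∈ ℝ, λ ∈ (0,1] } < ∞. Define (P u₀)(t,x) := ⟨u₀, P_t(x−·)⟩ for (t,x) ∈ (0,T] × ℝ. Then for every γ ∈ (0,1) there is a constant C, independent of u₀, such that sup_{(t,x)∈(0,T]×ℝ} |t|₀^{−η} |(P u₀)(t,x)| + sup_{t∈(0,T]} sup_{x≠x̄∈ℝ} |(P u₀)(t,x̄) − (P u₀)(t,x)| / (|t|₀^{η−γ} |x̄−x|^γ) + sup_{x∈ℝ} sup_{t≠t̄∈(0,T], |t̄−t|≤|t,t̄|₀²} |(P u₀)(t̄,x) − (P u₀)(t,x)| / (|t,t̄|₀^{η−γ} |t̄−t|^{γ/2}) ≤ C ‖u₀‖_{C^η}. -/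

import Mathlib

open Real MeasureTheory

noncomputable section

/-- `φ ∈ B^r_0`: a smooth function supported in `[-1,1]` whose derivatives up to
order `r` are bounded by `1`. -/
def IsTestFunction (r : ℕ) (φ : ℝ → ℝ) : Prop :=
  ContDiff ℝ (⊤ : ℕ∞) φ ∧ (∀ y : ℝ, y ∉ Set.Icc (-1 : ℝ) 1 → φ y = 0) ∧
    ∀ j ≤ r, ∀ y : ℝ, |iteratedDeriv j φ y| ≤ 1

/-- The heat kernel `P_t(x) = (4πt)^{-1/2} e^{-x²/(4t)}` for `t > 0`, and `0`
for `t ≤ 0`. -/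
def heatKernel (t x : ℝ) : ℝ :=
  if 0 < t then (4 * Real.pi * t) ^ (-(1 : ℝ) / 2) * Real.exp (-(x ^ 2) / (4 * t)) else 0

/-- `|t|₀ = |t|^{1/2} ∧ 1`. -/
def tnorm (t : ℝ) : ℝ := min (Real.sqrt |t|) 1

/-- `|t,t̄|₀ = |t|₀ ∧ |t̄|₀`. -/
def tnorm2 (t s : ℝ) : ℝ := min (tnorm t) (tnorm s)

/-- The parabolic distance `‖z̄ - z‖_s = |t̄-t|^{1/2} ∨ |x̄-x|`. -/
def pnormS (z w : ℝ × ℝ) : ℝ := max (Real.sqrt |z.1 - w.1|) |z.2 - w.2|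

/-
A bound against compactly supported test functions at unit scale extends to all Schwartz functions:
a smooth partition of unity cuts `g` into pieces living on intervals `[k, k + 2]`, and the decay
of `g` makes the contributions of the pieces summable over `k`. Applied to the rescalings of `u`
this turns the `C^η` bound into `|⟨u, g_x^s⟩| ≲ M (s ∧ 1)^η ‖g‖` with a Schwartz norm of `g`.

The heat kernel is the rescaling of the single profile `P_1` at scale `s = √t`. Moving the centre
by `s h` or multiplying the scale by `1 + δ` replaces the profile by one that differs from it by
`O(h)`, respectively `O(δ)`, in the Schwartz norm. Interpolating with the trivial bound gives the
Hölder estimates, since `|t' - t| ≤ |t, t'|₀²` forces `δ ≲ |t' - t| / |t, t'|₀² ≤ 1`.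
-/

open scoped SchwartzMap ContDiff Topology

section SchwartzNorm

variable {E F : Type*} [NormedAddCommGroup E] [NormedSpace ℝ E]
  [NormedAddCommGroup F] [NormedSpace ℝ F]

/-- The largest of the Schwartz seminorms `sup ‖x‖ ^ k' ‖D ^ n' f x‖` with `k' ≤ k` and `n' ≤ n`.
It is equivalent to `sup (1 + ‖x‖) ^ k ‖D ^ n' f x‖`, `n' ≤ n`, which is how it is used. -/
def schwartzNorm (k n : ℕ) : Seminorm ℝ 𝓢(E, F) :=
  (Finset.Iic (k, n)).sup (schwartzSeminormFamily ℝ E F)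

theorem schwartzNorm_mono {k k' n n' : ℕ} (hk : k ≤ k') (hn : n ≤ n') (f : 𝓢(E, F)) :
    schwartzNorm k n f ≤ schwartzNorm k' n' f :=
  Seminorm.le_def.1 (Finset.sup_mono (Finset.Iic_subset_Iic.2 (Prod.mk_le_mk.2 ⟨hk, hn⟩))) f

theorem one_add_norm_pow_mul_iteratedFDeriv_le_schwartzNorm {k n j : ℕ} (hj : j ≤ n)
    (f : 𝓢(E, F)) (x : E) :
    (1 + ‖x‖) ^ k * ‖iteratedFDeriv ℝ j f x‖ ≤ 2 ^ k * schwartzNorm k n f :=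
  SchwartzMap.one_add_le_sup_seminorm_apply (𝕜 := ℝ) (m := (k, n)) le_rfl hj f x

theorem schwartzNorm_le_of_forall_le {k n : ℕ} {f : 𝓢(E, F)} {A : ℝ}
    (h : ∀ j ≤ n, ∀ x, (1 + ‖x‖) ^ k * ‖iteratedFDeriv ℝ j f x‖ ≤ A) :
    schwartzNorm k n f ≤ A := by
  have hA : 0 ≤ A := le_trans (by positivity) (h 0 n.zero_le 0)
  refine Seminorm.finset_sup_apply_le hA fun ⟨i, j⟩ hij => ?_
  obtain ⟨hi, hj⟩ : i ≤ k ∧ j ≤ n := by simpa using hij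
  refine SchwartzMap.seminorm_le_bound ℝ i j f hA fun x => (h j hj x).trans' ?_
  gcongr
  calc ‖x‖ ^ i ≤ (1 + ‖x‖) ^ i := by gcongr; linarith
    _ ≤ (1 + ‖x‖) ^ k := by gcongr; linarith [norm_nonneg x]

theorem one_add_abs_pow_mul_iteratedDeriv_le_schwartzNorm {k n j : ℕ} (hj : j ≤ n)
    (f : 𝓢(ℝ, F)) (x : ℝ) :
    (1 + |x|) ^ k * ‖iteratedDeriv j f x‖ ≤ 2 ^ k * schwartzNorm k n f := by
  simpa only [norm_iteratedFDeriv_eq_norm_iteratedDeriv, Real.norm_eq_abs] using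
    one_add_norm_pow_mul_iteratedFDeriv_le_schwartzNorm hj f x

theorem schwartzNorm_le_of_forall_iteratedDeriv_le {k n : ℕ} {f : 𝓢(ℝ, F)} {A : ℝ}
    (h : ∀ j ≤ n, ∀ x, (1 + |x|) ^ k * ‖iteratedDeriv j f x‖ ≤ A) : schwartzNorm k n f ≤ A :=
  schwartzNorm_le_of_forall_le <| by
    simpa only [norm_iteratedFDeriv_eq_norm_iteratedDeriv, Real.norm_eq_abs] using h

theorem schwartzNorm_sub_le_of_hasDerivAt {k n : ℕ} {f : ℝ → 𝓢(ℝ, F)} {f' : ℕ → ℝ → ℝ → F}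
    {s : Set ℝ} (hs : Convex ℝ s) {A : ℝ}
    (hf : ∀ j ≤ n, ∀ x, ∀ τ ∈ s,
      HasDerivAt (fun τ => iteratedDeriv j (f τ) x) (f' j τ x) τ)
    (hf' : ∀ j ≤ n, ∀ x, ∀ τ ∈ s, (1 + |x|) ^ k * ‖f' j τ x‖ ≤ A)
    {a b : ℝ} (ha : a ∈ s) (hb : b ∈ s) : schwartzNorm k n (f b - f a) ≤ A * |b - a| := by
  refine schwartzNorm_le_of_forall_iteratedDeriv_le fun j hj x => ?_
  have hx : 0 < (1 + |x|) ^ k := by positivity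
  have mean_value : ‖iteratedDeriv j (f b) x - iteratedDeriv j (f a) x‖ ≤
      A / (1 + |x|) ^ k * ‖b - a‖ :=
    hs.norm_image_sub_le_of_norm_hasDerivWithin_le
      (fun τ hτ => (hf j hj x τ hτ).hasDerivWithinAt)
      (fun τ hτ => (le_div_iff₀' hx).2 (hf' j hj x τ hτ)) ha hb
  have hsub : iteratedDeriv j (f b - f a : 𝓢(ℝ, F)) x =
      iteratedDeriv j (f b) x - iteratedDeriv j (f a) x :=
    iteratedDeriv_sub ((f b).smooth j).contDiffAt ((f a).smooth j).contDiffAt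
  rw [hsub]
  calc (1 + |x|) ^ k * ‖iteratedDeriv j (f b) x - iteratedDeriv j (f a) x‖
      ≤ (1 + |x|) ^ k * (A / (1 + |x|) ^ k * ‖b - a‖) := by gcongr
    _ = A * |b - a| := by rw [Real.norm_eq_abs]; field_simp

theorem norm_iteratedFDeriv_smul_le_two_pow_mul {θ : E → ℝ} {f : E → F} {x : E} {n : ℕ} {D B : ℝ}
    (hθ : ContDiff ℝ n θ) (hf : ContDiff ℝ n f)
    (hD : ∀ j ≤ n, ‖iteratedFDeriv ℝ j θ x‖ ≤ D) (hB : ∀ j ≤ n, ‖iteratedFDeriv ℝ j f x‖ ≤ B) :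
    ‖iteratedFDeriv ℝ n (fun y => θ y • f y) x‖ ≤ 2 ^ n * (D * B) := by
  have hD₀ : 0 ≤ D := (norm_nonneg _).trans (hD 0 n.zero_le)
  calc ‖iteratedFDeriv ℝ n (fun y => θ y • f y) x‖
      ≤ ∑ i ∈ Finset.range (n + 1), (n.choose i : ℝ) * ‖iteratedFDeriv ℝ i θ x‖ *
          ‖iteratedFDeriv ℝ (n - i) f x‖ := norm_iteratedFDeriv_smul_le hθ hf x le_rfl
    _ ≤ ∑ i ∈ Finset.range (n + 1), (n.choose i : ℝ) * D * B := by
        gcongr with i hi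
        · exact hD i (by grind)
        · exact hB _ (n.sub_le i)
    _ = 2 ^ n * (D * B) := by
        rw [← Finset.sum_mul, ← Finset.sum_mul, mul_assoc]
        have hsum : ∑ i ∈ Finset.range (n + 1), (n.choose i : ℝ) = 2 ^ n := by
          exact_mod_cast Nat.sum_range_choose n
        rw [hsum]

theorem seminorm_smulLeftCLM_sub_le {θ : E → ℝ} {n : ℕ} {D R : ℝ} (hR : 0 < R)
    (hθ : θ.HasTemperateGrowth) (hD : ∀ j ≤ n, ∀ x, ‖iteratedFDeriv ℝ j θ x‖ ≤ D)
    (h_one : ∀ x, ‖x‖ < R → θ x = 1) (k : ℕ) (f : 𝓢(E, F)) :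
    SchwartzMap.seminorm ℝ k n (SchwartzMap.smulLeftCLM F θ f - f) ≤
      (2 ^ n * D + 1) * (2 ^ (k + 1) * schwartzNorm (k + 1) n f) / R := by
  set B := 2 ^ (k + 1) * schwartzNorm (k + 1) n f
  have : 0 ≤ B := by positivity
  have hD₀ : 0 ≤ D := (norm_nonneg _).trans (hD 0 n.zero_le 0)
  refine SchwartzMap.seminorm_le_bound ℝ k n _ (by positivity) fun x => ?_
  rcases lt_or_ge ‖x‖ R with hx | hx
  · have vanishes : (SchwartzMap.smulLeftCLM F θ f - f : 𝓢(E, F)) =ᶠ[𝓝 x] fun _ => 0 := by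
      filter_upwards [(isOpen_lt continuous_norm continuous_const).mem_nhds hx] with y hy
      simp [SchwartzMap.smulLeftCLM_apply_apply hθ, h_one y hy]
    rw [(vanishes.iteratedFDeriv ℝ n).eq_of_nhds]
    simp only [iteratedFDeriv_fun_zero, Pi.zero_apply, norm_zero, mul_zero]
    positivity
  · have hw : 0 < (1 + ‖x‖) ^ (k + 1) := by positivity
    have decay (j : ℕ) (hj : j ≤ n) : ‖iteratedFDeriv ℝ j f x‖ ≤ B / (1 + ‖x‖) ^ (k + 1) :=
      (le_div_iff₀' hw).2 (one_add_norm_pow_mul_iteratedFDeriv_le_schwartzNorm hj f x)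
    have hsmul : (SchwartzMap.smulLeftCLM F θ f : E → F) = fun y => θ y • f y :=
      funext (SchwartzMap.smulLeftCLM_apply_apply hθ f)
    have hsub : iteratedFDeriv ℝ n (SchwartzMap.smulLeftCLM F θ f - f : 𝓢(E, F)) x =
        iteratedFDeriv ℝ n (SchwartzMap.smulLeftCLM F θ f) x - iteratedFDeriv ℝ n f x :=
      iteratedFDeriv_sub_apply (SchwartzMap.smooth _ n).contDiffAt (f.smooth n).contDiffAt
    have leibniz := norm_iteratedFDeriv_smul_le_two_pow_mul (hθ.1.of_le (by exact_mod_cast le_top))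
      (f.smooth n) (fun j hj => hD j hj x) decay
    rw [hsub, hsmul]
    calc ‖x‖ ^ k * ‖iteratedFDeriv ℝ n (fun y => θ y • f y) x - iteratedFDeriv ℝ n f x‖
        ≤ ‖x‖ ^ k * (2 ^ n * (D * (B / (1 + ‖x‖) ^ (k + 1))) + B / (1 + ‖x‖) ^ (k + 1)) := by
          gcongr
          exact (norm_sub_le _ _).trans (add_le_add leibniz (decay n le_rfl))
      _ = (2 ^ n * D + 1) * B * (‖x‖ ^ k / (1 + ‖x‖) ^ (k + 1)) := by ring
      _ ≤ (2 ^ n * D + 1) * B * (1 / R) := by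
          gcongr ?_ * ?_
          rw [div_le_div_iff₀ hw hR, one_mul, pow_succ]
          gcongr <;> linarith
      _ = (2 ^ n * D + 1) * B / R := by ring

theorem tendsto_smulLeftCLM_of_eq_one_of_norm_lt {θ : ℕ → E → ℝ} {D : ℕ → ℝ}
    (hθ : ∀ N, (θ N).HasTemperateGrowth)
    (hD : ∀ n N, ∀ j ≤ n, ∀ x, ‖iteratedFDeriv ℝ j (θ N) x‖ ≤ D n)
    (h_one : ∀ (N : ℕ) x, ‖x‖ < N → θ N x = 1) (f : 𝓢(E, F)) :
    Filter.Tendsto (fun N => SchwartzMap.smulLeftCLM F (θ N) f) Filter.atTop (𝓝 f) := by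
  refine ((schwartz_withSeminorms ℝ E F).tendsto_nhds _ _).2 fun ⟨k, n⟩ ε hε => ?_
  have small := (tendsto_const_div_atTop_nhds_zero_nat
    ((2 ^ n * D n + 1) * (2 ^ (k + 1) * schwartzNorm (k + 1) n f))).eventually_lt_const hε
  filter_upwards [small, Filter.eventually_gt_atTop 0] with N hN hN₀
  exact (seminorm_smulLeftCLM_sub_le (by exact_mod_cast hN₀) (hθ N) (hD n N) (h_one N) k f).trans_lt
    hN

end SchwartzNorm

section SmoothPlateau

/-- A smooth function which vanishes off `[a, b + 1]` and equals `1` on `[a + 1, b]`. Adjacent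
plateaus add up to a longer one, so the functions `smoothPlateau k (k + 1)`, `k : ℤ`, form a
partition of unity. -/
def smoothPlateau (a b x : ℝ) : ℝ := smoothTransition (x - a) - smoothTransition (x - b)

theorem smoothPlateau_eq_zero {a b x : ℝ} (hab : a ≤ b) (hx : x ∉ Set.Icc a (b + 1)) :
    smoothPlateau a b x = 0 := by
  rcases lt_or_ge x a with h | h
  · rw [smoothPlateau, smoothTransition.zero_of_nonpos (by linarith),
      smoothTransition.zero_of_nonpos (by linarith), sub_zero]
  · have h' : b + 1 < x := by
      by_contra! h'
      exact hx ⟨h, h'⟩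
    rw [smoothPlateau, smoothTransition.one_of_one_le (by linarith),
      smoothTransition.one_of_one_le (by linarith), sub_self]

theorem smoothPlateau_eq_one {a b x : ℝ} (hx : x ∈ Set.Icc (a + 1) b) :
    smoothPlateau a b x = 1 := by
  rw [smoothPlateau, smoothTransition.one_of_one_le (by linarith [hx.1]),
    smoothTransition.zero_of_nonpos (by linarith [hx.2]), sub_zero]

theorem sum_smoothPlateau_Ico (N : ℕ) (x : ℝ) :
    ∑ k ∈ Finset.Ico (-N : ℤ) N, smoothPlateau k (k + 1) x = smoothPlateau (-N) N x := by
  simpa [smoothPlateau] using Finset.sum_Ico_int_sub N fun k : ℤ => smoothTransition (x - k)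

theorem contDiff_smoothPlateau (a b : ℝ) {n : WithTop ℕ∞} (hn : n ≤ ∞) :
    ContDiff ℝ n (smoothPlateau a b) := by
  have h : ContDiff ℝ n smoothTransition := smoothTransition.contDiff.of_le hn
  exact (h.comp (contDiff_id.sub contDiff_const)).sub (h.comp (contDiff_id.sub contDiff_const))

theorem exists_abs_iteratedDeriv_smoothTransition_le (n : ℕ) :
    ∃ D, ∀ j ≤ n, ∀ x, |iteratedDeriv j smoothTransition x| ≤ D := by
  have bound_of_order (j : ℕ) : ∃ D, ∀ x, |iteratedDeriv j smoothTransition x| ≤ D := by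
    obtain ⟨D, hD⟩ := (isCompact_Icc (a := (0 : ℝ)) (b := 1)).exists_bound_of_continuousOn
      (smoothTransition.contDiff (n := j)).continuous_iteratedDeriv'.continuousOn
    have const_le (c : ℝ) (hc : |c| ≤ 1) (x : ℝ) : |iteratedDeriv j (fun _ => c) x| ≤ 1 := by
      rw [iteratedDeriv_const]
      split_ifs <;> simp [hc]
    refine ⟨max D 1, fun x => ?_⟩
    rcases lt_or_ge x 0 with h₀ | h₀
    · have : smoothTransition =ᶠ[𝓝 x] fun _ => 0 := by
        filter_upwards [gt_mem_nhds h₀] with y hy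
        exact smoothTransition.zero_of_nonpos (le_of_lt hy)
      rw [this.iteratedDeriv_eq]
      exact (const_le 0 (by simp) x).trans (le_max_right _ _)
    rcases lt_or_ge 1 x with h₁ | h₁
    · have : smoothTransition =ᶠ[𝓝 x] fun _ => 1 := by
        filter_upwards [lt_mem_nhds h₁] with y hy
        exact smoothTransition.one_of_one_le (le_of_lt hy)
      rw [this.iteratedDeriv_eq]
      exact (const_le 1 (by simp) x).trans (le_max_right _ _)
    · exact (hD x ⟨h₀, h₁⟩).trans (le_max_left _ _)
  choose D hD using bound_of_order
  exact ⟨∑ j ∈ Finset.range (n + 1), D j, fun j hj x => (hD j x).trans <|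
    Finset.single_le_sum (fun i _ => (abs_nonneg _).trans (hD i 0)) (by grind)⟩

theorem exists_abs_iteratedDeriv_smoothPlateau_le (n : ℕ) :
    ∃ D > 0, ∀ a b, ∀ j ≤ n, ∀ x, |iteratedDeriv j (smoothPlateau a b) x| ≤ D := by
  obtain ⟨D, hD⟩ := exists_abs_iteratedDeriv_smoothTransition_le n
  have hD₀ : 0 < D := by
    have := hD 0 n.zero_le 1
    rw [iteratedDeriv_zero, smoothTransition.one, abs_one] at this
    linarith
  refine ⟨D + D, by positivity, fun a b j hj x => ?_⟩
  have contDiffAt_sub_const (c : ℝ) : ContDiffAt ℝ j (fun y => smoothTransition (y - c)) x :=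
    (smoothTransition.contDiff.comp (contDiff_id.sub contDiff_const)).contDiffAt
  have hsub : iteratedDeriv j (smoothPlateau a b) x =
      iteratedDeriv j smoothTransition (x - a) - iteratedDeriv j smoothTransition (x - b) := by
    have := iteratedDeriv_sub (contDiffAt_sub_const a) (contDiffAt_sub_const b)
    rwa [iteratedDeriv_comp_sub_const, iteratedDeriv_comp_sub_const] at this
  rw [hsub]
  exact (abs_sub _ _).trans (add_le_add (hD j hj _) (hD j hj _))

theorem hasTemperateGrowth_smoothPlateau (a b : ℝ) : (smoothPlateau a b).HasTemperateGrowth := by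
  refine ⟨contDiff_smoothPlateau a b le_rfl, fun n => ?_⟩
  obtain ⟨D, -, hD⟩ := exists_abs_iteratedDeriv_smoothPlateau_le n
  refine ⟨0, D, fun x => ?_⟩
  simpa [norm_iteratedFDeriv_eq_norm_iteratedDeriv] using hD a b n le_rfl x

theorem tendsto_sum_smulLeftCLM_smoothPlateau (g : 𝓢(ℝ, ℝ)) :
    Filter.Tendsto (fun N : ℕ => ∑ k ∈ Finset.Ico (-N : ℤ) N,
      SchwartzMap.smulLeftCLM ℝ (smoothPlateau k (k + 1)) g) Filter.atTop (𝓝 g) := by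
  choose D _ hD using exists_abs_iteratedDeriv_smoothPlateau_le
  have sum_eq (N : ℕ) : ∑ k ∈ Finset.Ico (-N : ℤ) N,
      SchwartzMap.smulLeftCLM ℝ (smoothPlateau k (k + 1)) g =
        SchwartzMap.smulLeftCLM ℝ (smoothPlateau (-N) N) g := by
    ext x
    simp [SchwartzMap.smulLeftCLM_apply_apply (hasTemperateGrowth_smoothPlateau _ _),
      ← sum_smoothPlateau_Ico, Finset.sum_mul]
  simp only [sum_eq]
  rw [← Filter.tendsto_add_atTop_iff_nat 1]
  refine tendsto_smulLeftCLM_of_eq_one_of_norm_lt (D := D)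
    (fun N => hasTemperateGrowth_smoothPlateau _ _) (fun n N j hj x => ?_) (fun N x hx => ?_) g
  · rw [norm_iteratedFDeriv_eq_norm_iteratedDeriv]
    exact hD n _ _ j hj x
  · have := abs_lt.1 hx
    refine smoothPlateau_eq_one ⟨?_, ?_⟩ <;> push_cast <;> linarith

-- The weight sits at a half-integer, so it never takes the junk value `1 / 0`.
theorem norm_iteratedDeriv_le_schwartzNorm_div_of_mem_Icc {n j : ℕ} (hj : j ≤ n) (g : 𝓢(ℝ, ℝ))
    {k : ℤ} {x : ℝ} (hx : x ∈ Set.Icc (k : ℝ) (k + 1 + 1)) :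
    ‖iteratedDeriv j g x‖ ≤ 16 * schwartzNorm 2 n g * (1 / |(k : ℝ) + 1 / 2| ^ 2) := by
  have hk : 0 < |(k : ℝ) + 1 / 2| := by
    refine abs_pos.2 fun h => ?_
    have : 2 * k + 1 = 0 := by exact_mod_cast (by linarith : (2 * k + 1 : ℝ) = 0)
    omega
  have weight : |(k : ℝ) + 1 / 2| ≤ 2 * (1 + |x|) := by
    rw [abs_le]
    constructor <;> linarith [hx.1, hx.2, neg_abs_le x, le_abs_self x]
  have hg := one_add_abs_pow_mul_iteratedDeriv_le_schwartzNorm (k := 2) hj g x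
  rw [mul_one_div, le_div_iff₀' (by positivity)]
  calc |(k : ℝ) + 1 / 2| ^ 2 * ‖iteratedDeriv j g x‖
      ≤ (2 * (1 + |x|)) ^ 2 * ‖iteratedDeriv j g x‖ := by gcongr
    _ = 4 * ((1 + |x|) ^ 2 * ‖iteratedDeriv j g x‖) := by ring
    _ ≤ 16 * schwartzNorm 2 n g := by linarith

theorem exists_abs_iteratedDeriv_smulLeftCLM_smoothPlateau_le (n : ℕ) :
    ∃ K > 0, ∀ (g : 𝓢(ℝ, ℝ)) (k : ℤ), ∀ j ≤ n, ∀ x,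
      |iteratedDeriv j (SchwartzMap.smulLeftCLM ℝ (smoothPlateau k (k + 1)) g) x| ≤
        K * schwartzNorm 2 n g * (1 / |(k : ℝ) + 1 / 2| ^ 2) := by
  obtain ⟨D, hD₀, hD⟩ := exists_abs_iteratedDeriv_smoothPlateau_le n
  refine ⟨2 ^ n * D * 16, by positivity, fun g k j hj x => ?_⟩
  have hmul : (SchwartzMap.smulLeftCLM ℝ (smoothPlateau k (k + 1)) g : ℝ → ℝ) =
      fun y => smoothPlateau k (k + 1) y • g y :=
    funext (SchwartzMap.smulLeftCLM_apply_apply (hasTemperateGrowth_smoothPlateau _ _) g)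
  rw [hmul]
  by_cases hx : x ∈ Set.Icc (k : ℝ) (k + 1 + 1)
  · set w := 16 * schwartzNorm 2 n g * (1 / |(k : ℝ) + 1 / 2| ^ 2)
    have leibniz := norm_iteratedFDeriv_smul_le_two_pow_mul (n := j) (D := D) (B := w) (x := x)
      (contDiff_smoothPlateau k (k + 1) (by exact_mod_cast le_top)) (g.smooth j)
    simp only [norm_iteratedFDeriv_eq_norm_iteratedDeriv] at leibniz
    calc |iteratedDeriv j (fun y => smoothPlateau k (k + 1) y • g y) x|
        ≤ 2 ^ j * (D * w) := leibniz (fun i hi => hD k (k + 1) i (hi.trans hj) x) fun i hi =>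
          norm_iteratedDeriv_le_schwartzNorm_div_of_mem_Icc (hi.trans hj) g hx
      _ ≤ 2 ^ n * (D * w) := by
          gcongr
          norm_num
      _ = 2 ^ n * D * 16 * schwartzNorm 2 n g * (1 / |(k : ℝ) + 1 / 2| ^ 2) := by ring
  · have vanishes : (fun y => smoothPlateau k (k + 1) y • g y) =ᶠ[𝓝 x] fun _ => 0 := by
      filter_upwards [isClosed_Icc.isOpen_compl.mem_nhds hx] with y hy
      rw [smoothPlateau_eq_zero (by linarith) hy, zero_smul]
    simp only [vanishes.iteratedDeriv_eq, iteratedDeriv_const, ite_self, abs_zero]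
    positivity

end SmoothPlateau

section UnitScale

variable {r : ℕ} {v : 𝓢(ℝ, ℝ) →L[ℝ] ℝ} {B : ℝ}

/-- `v` is bounded by `B` on every translate of a test function in `B^r_0`. -/
def UnitScaleBound (r : ℕ) (v : 𝓢(ℝ, ℝ) →L[ℝ] ℝ) (B : ℝ) : Prop :=
  ∀ (c : ℝ) (Φ : 𝓢(ℝ, ℝ)), IsTestFunction r (fun y => Φ (y + c)) → |v Φ| ≤ B

theorem isTestFunction_zero (r : ℕ) : IsTestFunction r fun _ => 0 :=
  ⟨contDiff_const, fun _ _ => rfl, fun j _ y => by simp⟩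

theorem UnitScaleBound.nonneg (hv : UnitScaleBound r v B) : 0 ≤ B :=
  (abs_nonneg _).trans (hv 0 0 (isTestFunction_zero r))

theorem UnitScaleBound.abs_apply_le (hv : UnitScaleBound r v B) {c A : ℝ} {Φ : 𝓢(ℝ, ℝ)}
    (hsupp : ∀ y ∉ Set.Icc (c - 1) (c + 1), Φ y = 0)
    (hderiv : ∀ j ≤ r, ∀ y, |iteratedDeriv j Φ y| ≤ A) : |v Φ| ≤ B * A := by
  rcases ((abs_nonneg _).trans (hderiv 0 r.zero_le 0)).eq_or_lt with hA | hA
  · have hΦ : Φ = 0 := by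
      ext y
      simpa [← hA] using hderiv 0 r.zero_le y
    simp [hΦ, ← hA]
  · have htest : IsTestFunction r fun y => (A⁻¹ • Φ) (y + c) := by
      refine ⟨((A⁻¹ • Φ).smooth ⊤).comp (contDiff_id.add contDiff_const), fun y hy => ?_,
        fun j hj y => ?_⟩
      · have hyc : y + c ∉ Set.Icc (c - 1) (c + 1) := fun h =>
          hy ⟨by linarith [h.1], by linarith [h.2]⟩
        simp only [smul_apply, hsupp _ hyc, smul_zero]
      · have hscale : iteratedDeriv j (fun y => (A⁻¹ • Φ) (y + c)) y =
            A⁻¹ * iteratedDeriv j Φ (y + c) := by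
          simp only [iteratedDeriv_comp_add_const, smul_apply, smul_eq_mul,
            iteratedDeriv_const_mul_field]
        rw [hscale, abs_mul, abs_of_pos (inv_pos.2 hA), inv_mul_le_one₀ hA]
        exact hderiv j hj _
    have := hv c _ htest
    rwa [map_smul, smul_eq_mul, abs_mul, abs_of_pos (inv_pos.2 hA), inv_mul_le_iff₀ hA,
      mul_comm] at this

theorem exists_forall_unitScaleBound_abs_apply_le (r : ℕ) :
    ∃ K > 0, ∀ v B, UnitScaleBound r v B → ∀ g, |v g| ≤ K * B * schwartzNorm 2 r g := by
  obtain ⟨K, hK, hpiece⟩ := exists_abs_iteratedDeriv_smulLeftCLM_smoothPlateau_le r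
  have hsum : Summable fun k : ℤ => 1 / |(k : ℝ) + 1 / 2| ^ 2 := by
    simpa using (Real.summable_one_div_int_add_rpow (1 / 2) 2).2 one_lt_two
  set W := ∑' k : ℤ, 1 / |(k : ℝ) + 1 / 2| ^ 2
  have hW : 0 < W := hsum.tsum_pos (fun k => by positivity) 0 (by positivity)
  refine ⟨K * W, by positivity, fun v B hv g => ?_⟩
  have hB := hv.nonneg
  set piece : ℤ → 𝓢(ℝ, ℝ) := fun k => SchwartzMap.smulLeftCLM ℝ (smoothPlateau k (k + 1)) g
  have piece_le (k : ℤ) :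
      |v (piece k)| ≤ B * (K * schwartzNorm 2 r g * (1 / |(k : ℝ) + 1 / 2| ^ 2)) := by
    refine hv.abs_apply_le (c := k + 1) (fun y hy => ?_) (hpiece g k)
    rw [SchwartzMap.smulLeftCLM_apply_apply (hasTemperateGrowth_smoothPlateau _ _),
      smoothPlateau_eq_zero (by linarith) (by simpa using hy), zero_smul]
  have partial_sum_le (N : ℕ) :
      |v (∑ k ∈ Finset.Ico (-N : ℤ) N, piece k)| ≤ K * W * B * schwartzNorm 2 r g := by
    calc |v (∑ k ∈ Finset.Ico (-N : ℤ) N, piece k)|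
        ≤ ∑ k ∈ Finset.Ico (-N : ℤ) N, |v (piece k)| := by
          rw [map_sum]
          exact Finset.abs_sum_le_sum_abs _ _
      _ ≤ ∑ k ∈ Finset.Ico (-N : ℤ) N,
            B * (K * schwartzNorm 2 r g * (1 / |(k : ℝ) + 1 / 2| ^ 2)) :=
          Finset.sum_le_sum fun k _ => piece_le k
      _ = B * (K * schwartzNorm 2 r g) *
            ∑ k ∈ Finset.Ico (-N : ℤ) N, 1 / |(k : ℝ) + 1 / 2| ^ 2 := by
          rw [Finset.mul_sum]
          simp only [mul_assoc]
      _ ≤ B * (K * schwartzNorm 2 r g) * W := by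
          gcongr
          exact hsum.sum_le_tsum _ fun k _ => by positivity
      _ = K * W * B * schwartzNorm 2 r g := by ring
  exact le_of_tendsto
    ((v.continuous.tendsto g).comp (tendsto_sum_smulLeftCLM_smoothPlateau g)).abs
    (Filter.Eventually.of_forall partial_sum_le)

end UnitScale

section Rescale

variable {F : Type*} [NormedAddCommGroup F] [NormedSpace ℝ F]

/-- The recentered rescaling `g_x^l (y) = l⁻¹ g (l⁻¹ (y - x))` as an operator on Schwartz functions.
For `l = 0` it is the zero operator, so that the formula, with `0⁻¹ = 0`, holds for every `l`. -/
def rescale (l x : ℝ) : 𝓢(ℝ, F) →L[ℝ] 𝓢(ℝ, F) :=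
  if hl : l = 0 then 0
  else l⁻¹ • (SchwartzMap.compSubConstCLM ℝ x).comp
    (SchwartzMap.compCLMOfContinuousLinearEquiv ℝ
      (ContinuousLinearEquiv.smulLeft (Units.mk0 l⁻¹ (inv_ne_zero hl))))

theorem rescale_apply (l x : ℝ) (g : 𝓢(ℝ, F)) (y : ℝ) :
    rescale l x g y = l⁻¹ • g (l⁻¹ * (y - x)) := by
  rcases eq_or_ne l 0 with rfl | hl
  · simp [rescale]
  · simp [rescale, hl, Units.smul_def]

theorem rescale_rescale (l x σ h : ℝ) (g : 𝓢(ℝ, F)) :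
    rescale l x (rescale σ h g) = rescale (l * σ) (x + l * h) g := by
  ext y
  rcases eq_or_ne l 0 with rfl | hl
  · simp [rescale_apply]
  · have harg : σ⁻¹ * (l⁻¹ * (y - x) - h) = (l * σ)⁻¹ * (y - (x + l * h)) := by
      rw [mul_inv_rev, mul_assoc]
      congr 1
      field_simp
      ring
    simp only [rescale_apply, smul_smul, harg, mul_inv]

theorem rescale_one_zero (g : 𝓢(ℝ, F)) : rescale 1 0 g = g := by
  ext y
  simp [rescale_apply]

theorem iteratedDeriv_rescale (l x : ℝ) (g : 𝓢(ℝ, F)) (j : ℕ) (y : ℝ) :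
    iteratedDeriv j (rescale l x g) y = l⁻¹ ^ (j + 1) • iteratedDeriv j g (l⁻¹ * (y - x)) := by
  have hfun : (rescale l x g : ℝ → F) = l⁻¹ • fun y => (fun z => g (l⁻¹ * z)) (y - x) :=
    funext (rescale_apply l x g)
  rw [hfun, iteratedDeriv_const_smul_field,
    iteratedDeriv_comp_sub_const (f := fun z => g (l⁻¹ * z))]
  simp only [iteratedDeriv_comp_const_smul (g.smooth j), smul_smul, pow_succ']

theorem hasDerivAt_iteratedDeriv (g : 𝓢(ℝ, F)) (j : ℕ) (x : ℝ) :
    HasDerivAt (iteratedDeriv j g) (iteratedDeriv (j + 1) g x) x := by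
  rw [iteratedDeriv_succ]
  exact ((g.smooth (j + 1)).differentiable_iteratedDeriv j
    (by exact_mod_cast j.lt_succ_self)).differentiableAt.hasDerivAt

theorem one_add_abs_pow_mul_iteratedDeriv_le_of_one_add_abs_le {k n j : ℕ} (hj : j ≤ n)
    (g : 𝓢(ℝ, F)) {x z c : ℝ} (hxz : 1 + |x| ≤ c * (1 + |z|)) :
    (1 + |x|) ^ k * ‖iteratedDeriv j g z‖ ≤ (2 * c) ^ k * schwartzNorm k n g := by
  have hc : 0 ≤ c := by
    by_contra! hc
    nlinarith [abs_nonneg x, abs_nonneg z]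
  calc (1 + |x|) ^ k * ‖iteratedDeriv j g z‖
      ≤ c ^ k * ((1 + |z|) ^ k * ‖iteratedDeriv j g z‖) := by
        rw [← mul_assoc, ← mul_pow]
        gcongr
    _ ≤ c ^ k * (2 ^ k * schwartzNorm k n g) := by
        gcongr ?_ * ?_
        exact one_add_abs_pow_mul_iteratedDeriv_le_schwartzNorm hj g z
    _ = (2 * c) ^ k * schwartzNorm k n g := by rw [← mul_assoc, ← mul_pow, mul_comm c]

theorem one_add_abs_le_mul_one_add_abs_inv_mul {σ c : ℝ} (hσ : 1 ≤ σ) (hc : σ ≤ c) (x : ℝ) :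
    1 + |x| ≤ c * (1 + |σ⁻¹ * x|) := by
  have hσ₀ : 0 < σ := by linarith
  calc 1 + |x| ≤ σ * (1 + |σ⁻¹ * x|) := by
        rw [abs_mul, abs_inv, abs_of_pos hσ₀, mul_add, mul_inv_cancel_left₀ hσ₀.ne']
        linarith
    _ ≤ c * (1 + |σ⁻¹ * x|) := by gcongr

theorem schwartzNorm_rescale_le {σ : ℝ} (hσ : 1 ≤ σ) (k n : ℕ) (g : 𝓢(ℝ, F)) :
    schwartzNorm k n (rescale σ 0 g) ≤ (2 * σ) ^ k * schwartzNorm k n g := by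
  refine schwartzNorm_le_of_forall_iteratedDeriv_le fun j hj x => ?_
  calc (1 + |x|) ^ k * ‖iteratedDeriv j (rescale σ 0 g) x‖
      = (1 + |x|) ^ k * (σ⁻¹ ^ (j + 1) * ‖iteratedDeriv j g (σ⁻¹ * x)‖) := by
        rw [iteratedDeriv_rescale, sub_zero, norm_smul, Real.norm_of_nonneg (by positivity)]
    _ ≤ (1 + |x|) ^ k * (1 * ‖iteratedDeriv j g (σ⁻¹ * x)‖) := by
        gcongr
        exact pow_le_one₀ (by positivity) (inv_le_one_of_one_le₀ hσ)
    _ ≤ (2 * σ) ^ k * schwartzNorm k n g := by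
        rw [one_mul]
        exact one_add_abs_pow_mul_iteratedDeriv_le_of_one_add_abs_le hj g
          (one_add_abs_le_mul_one_add_abs_inv_mul hσ le_rfl x)

theorem schwartzNorm_translate_sub_self_le {h : ℝ} (hh : |h| ≤ 1) (k n : ℕ) (g : 𝓢(ℝ, F)) :
    schwartzNorm k n (rescale 1 h g - g) ≤ 4 ^ k * schwartzNorm k (n + 1) g * |h| := by
  have deriv_in_h (j : ℕ) (x τ : ℝ) : HasDerivAt (fun τ => iteratedDeriv j (rescale 1 τ g) x)
      (-iteratedDeriv (j + 1) g (x - τ)) τ := by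
    simpa [iteratedDeriv_rescale, Function.comp_def] using
      (hasDerivAt_iteratedDeriv g j (x - τ)).scomp τ ((hasDerivAt_id τ).const_sub x)
  have bound (j : ℕ) (hj : j ≤ n) (x τ : ℝ) (hτ : τ ∈ Set.Icc (-1) 1) :
      (1 + |x|) ^ k * ‖-iteratedDeriv (j + 1) g (x - τ)‖ ≤ 4 ^ k * schwartzNorm k (n + 1) g := by
    have weight : 1 + |x| ≤ 2 * (1 + |x - τ|) := by
      linarith [abs_sub_abs_le_abs_sub x τ, abs_le.2 hτ, abs_nonneg (x - τ)]
    rw [norm_neg]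
    refine (one_add_abs_pow_mul_iteratedDeriv_le_of_one_add_abs_le (Nat.succ_le_succ hj) g
      weight).trans_eq ?_
    norm_num
  simpa only [rescale_one_zero, sub_zero] using
    schwartzNorm_sub_le_of_hasDerivAt (convex_Icc (-1) 1) (fun j _ x τ _ => deriv_in_h j x τ) bound
      (by norm_num : (0 : ℝ) ∈ Set.Icc (-1) 1) (abs_le.1 hh)

theorem hasDerivAt_iteratedDeriv_rescale_zero (g : 𝓢(ℝ, F)) (j : ℕ) (x : ℝ) {τ : ℝ} (hτ : τ ≠ 0) :
    HasDerivAt (fun τ => iteratedDeriv j (rescale τ 0 g) x)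
      (-τ⁻¹ ^ (j + 2) • ((j + 1 : ℝ) • iteratedDeriv j g (τ⁻¹ * x) +
        (τ⁻¹ * x) • iteratedDeriv (j + 1) g (τ⁻¹ * x))) τ := by
  have hinv := hasDerivAt_inv hτ
  have hcomp := (hasDerivAt_iteratedDeriv g j (τ⁻¹ * x)).scomp τ (hinv.mul_const x)
  simp only [iteratedDeriv_rescale, sub_zero]
  refine ((hinv.pow (j + 1)).smul hcomp).congr_deriv ?_
  simp only [Pi.pow_apply, Function.comp_apply, ← inv_pow, Nat.add_sub_cancel]
  push_cast
  module

theorem one_add_abs_pow_mul_deriv_rescale_zero_le {k n j : ℕ} (hj : j ≤ n) (g : 𝓢(ℝ, F)) (x : ℝ)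
    {τ : ℝ} (hτ : τ ∈ Set.Icc 1 2) :
    (1 + |x|) ^ k * ‖-τ⁻¹ ^ (j + 2) • ((j + 1 : ℝ) • iteratedDeriv j g (τ⁻¹ * x) +
      (τ⁻¹ * x) • iteratedDeriv (j + 1) g (τ⁻¹ * x))‖ ≤
    (n + 2) * (4 ^ (k + 1) * schwartzNorm (k + 1) (n + 1) g) := by
  have hτ₀ : 0 < τ := by linarith [hτ.1]
  have hτ₁ : τ⁻¹ ≤ 1 := inv_le_one_of_one_le₀ hτ.1
  set z := τ⁻¹ * x
  set A := 4 ^ (k + 1) * schwartzNorm (k + 1) (n + 1) g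
  have hzx : |z| ≤ 1 + |x| := by
    rw [abs_mul, abs_inv, abs_of_pos hτ₀]
    linarith [mul_le_of_le_one_left (abs_nonneg x) hτ₁]
  have decay (i : ℕ) (hi : i ≤ n + 1) : (1 + |x|) ^ (k + 1) * ‖iteratedDeriv i g z‖ ≤ A :=
    (one_add_abs_pow_mul_iteratedDeriv_le_of_one_add_abs_le hi g
      (one_add_abs_le_mul_one_add_abs_inv_mul hτ.1 hτ.2 x)).trans_eq (by norm_num [A])
  calc (1 + |x|) ^ k * ‖-τ⁻¹ ^ (j + 2) • ((j + 1 : ℝ) • iteratedDeriv j g z +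
        z • iteratedDeriv (j + 1) g z)‖
      ≤ (1 + |x|) ^ k * (1 * ((j + 1) * ‖iteratedDeriv j g z‖ +
          |z| * ‖iteratedDeriv (j + 1) g z‖)) := by
        rw [norm_smul, norm_neg, Real.norm_of_nonneg (by positivity)]
        gcongr
        · exact pow_le_one₀ (by positivity) hτ₁
        · refine (norm_add_le _ _).trans_eq ?_
          rw [norm_smul, norm_smul, Real.norm_eq_abs z, Real.norm_of_nonneg (by positivity)]
    _ ≤ (1 + |x|) ^ k * (1 * ((n + 1) * ((1 + |x|) * ‖iteratedDeriv j g z‖) +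
          (1 + |x|) * ‖iteratedDeriv (j + 1) g z‖)) := by
        gcongr
        exact le_mul_of_one_le_left (norm_nonneg _) (by linarith [abs_nonneg x])
    _ = (n + 1) * ((1 + |x|) ^ (k + 1) * ‖iteratedDeriv j g z‖) +
          (1 + |x|) ^ (k + 1) * ‖iteratedDeriv (j + 1) g z‖ := by ring
    _ ≤ (n + 1) * A + A := by
        gcongr
        · exact decay j (by lia)
        · exact decay (j + 1) (by lia)
    _ = (n + 2) * A := by ring

theorem schwartzNorm_dilate_sub_self_le {τ : ℝ} (hτ : τ ∈ Set.Icc 1 2) (k n : ℕ) (g : 𝓢(ℝ, F)) :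
    schwartzNorm k n (rescale τ 0 g - g) ≤
      (n + 2) * (4 ^ (k + 1) * schwartzNorm (k + 1) (n + 1) g) * (τ - 1) := by
  have hasDeriv (j : ℕ) (x σ : ℝ) (hσ : σ ∈ Set.Icc 1 2) :=
    hasDerivAt_iteratedDeriv_rescale_zero g j x (zero_lt_one.trans_le hσ.1).ne'
  simpa only [rescale_one_zero, abs_of_nonneg (sub_nonneg.2 hτ.1)] using
    schwartzNorm_sub_le_of_hasDerivAt (convex_Icc 1 2) (fun j _ => hasDeriv j)
      (fun j hj x σ hσ => one_add_abs_pow_mul_deriv_rescale_zero_le hj g x hσ)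
      (by norm_num : (1 : ℝ) ∈ Set.Icc 1 2) hτ

end Rescale

section ScalingBound

variable {u : 𝓢(ℝ, ℝ) →L[ℝ] ℝ}

/-- The bound `‖u‖_{C^η} ≤ M`, where `‖u‖_{C^η}` is the supremum of `l^{-η} |⟨u, φ_x^l⟩|` over
`φ ∈ B^r_0`, `x ∈ ℝ` and `l ∈ (0, 1]`. -/
def HasScalingBound (η : ℝ) (r : ℕ) (u : 𝓢(ℝ, ℝ) →L[ℝ] ℝ) (M : ℝ) : Prop :=
  ∀ x l : ℝ, l ∈ Set.Ioc (0 : ℝ) 1 → ∀ φ : ℝ → ℝ, IsTestFunction r φ →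
    ∀ Φ : 𝓢(ℝ, ℝ), (∀ y : ℝ, Φ y = l⁻¹ * φ (l⁻¹ * (y - x))) → l ^ (-η) * |u Φ| ≤ M

theorem HasScalingBound.nonneg {η M : ℝ} {r : ℕ} (hu : HasScalingBound η r u M) : 0 ≤ M := by
  simpa using hu 0 1 (by norm_num) _ (isTestFunction_zero r) 0 (by simp)

theorem HasScalingBound.unitScaleBound_comp_rescale {η M : ℝ} {r : ℕ}
    (hu : HasScalingBound η r u M) {l : ℝ} (hl : l ∈ Set.Ioc 0 1) (x : ℝ) :
    UnitScaleBound r (u.comp (rescale l x)) (M * l ^ η) := by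
  intro c Φ hΦ
  have hl₀ : 0 < l := hl.1
  have := hu (x + l * c) l hl _ hΦ (rescale l x Φ) fun y => by
    rw [rescale_apply, smul_eq_mul]
    congr 2
    field_simp
    ring
  rwa [Real.rpow_neg hl₀.le, inv_mul_le_iff₀ (by positivity), mul_comm] at this

theorem exists_forall_hasScalingBound_abs_apply_rescale_le (r : ℕ) (S : ℝ) :
    ∃ K > 0, ∀ η u M, HasScalingBound η r u M → ∀ s ∈ Set.Ioc 0 S, ∀ x g,
      |u (rescale s x g)| ≤ K * (M * min s 1 ^ η) * schwartzNorm 2 r g := by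
  obtain ⟨K, hK, hbound⟩ := exists_forall_unitScaleBound_abs_apply_le r
  refine ⟨K * (2 * max S 1) ^ 2, by positivity, fun η u M hu s ⟨hs₀, hsS⟩ x g => ?_⟩
  have hM := hu.nonneg
  have hl : min s 1 ∈ Set.Ioc 0 1 := ⟨lt_min hs₀ one_pos, min_le_right s 1⟩
  have split_scale : rescale s x g = rescale (min s 1) x (rescale (max s 1) 0 g) := by
    rw [rescale_rescale, mul_zero, add_zero, min_mul_max, mul_one]
  rw [split_scale]
  calc |u (rescale (min s 1) x (rescale (max s 1) 0 g))|
      ≤ K * (M * min s 1 ^ η) * schwartzNorm 2 r (rescale (max s 1) 0 g) :=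
        hbound _ _ (hu.unitScaleBound_comp_rescale hl x) _
    _ ≤ K * (M * min s 1 ^ η) * ((2 * max s 1) ^ 2 * schwartzNorm 2 r g) := by
        gcongr
        exact schwartzNorm_rescale_le (le_max_right s 1) 2 r g
    _ ≤ K * (M * min s 1 ^ η) * ((2 * max S 1) ^ 2 * schwartzNorm 2 r g) := by gcongr
    _ = K * (2 * max S 1) ^ 2 * (M * min s 1 ^ η) * schwartzNorm 2 r g := by ring

variable {k n : ℕ} {A s : ℝ}

theorem abs_apply_rescale_sub_center_le (hs : 0 < s)
    (hA : ∀ x g, |u (rescale s x g)| ≤ A * schwartzNorm k n g) (hA₀ : 0 ≤ A) {γ : ℝ}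
    (hγ : γ ∈ Set.Icc 0 1) (g : 𝓢(ℝ, ℝ)) (x x' : ℝ) :
    |u (rescale s x' g) - u (rescale s x g)| ≤
      2 * 4 ^ k * A * schwartzNorm k (n + 1) g * (|x' - x| / s) ^ γ := by
  set Q := schwartzNorm k (n + 1) g
  set h := (x' - x) / s
  have : 0 ≤ Q := by positivity
  have habs : |x' - x| / s = |h| := by rw [abs_div, abs_of_pos hs]
  rw [habs]
  rcases le_total |h| 1 with hh | hh
  · have hx' : x' = x + s * h := by
      simp only [h]
      field_simp
      ring
    calc |u (rescale s x' g) - u (rescale s x g)| = |u (rescale s x (rescale 1 h g - g))| := by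
          rw [map_sub, map_sub, rescale_rescale, mul_one, ← hx']
      _ ≤ A * (4 ^ k * Q * |h|) :=
          (hA x _).trans (by gcongr; exact schwartzNorm_translate_sub_self_le hh k n g)
      _ ≤ A * (4 ^ k * Q * |h| ^ γ) := by
          gcongr
          exact Real.self_le_rpow_of_le_one (abs_nonneg h) hh hγ.2
      _ ≤ 2 * 4 ^ k * A * Q * |h| ^ γ := by
          have : 0 ≤ A * (4 ^ k * Q * |h| ^ γ) := by positivity
          linarith
  · have size (y : ℝ) : |u (rescale s y g)| ≤ A * Q :=
      (hA y g).trans (by gcongr; exact schwartzNorm_mono le_rfl n.le_succ g)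
    calc |u (rescale s x' g) - u (rescale s x g)| ≤ A * Q + A * Q :=
          (abs_sub _ _).trans (add_le_add (size x') (size x))
      _ = 2 * 1 * A * Q * 1 := by ring
      _ ≤ 2 * 4 ^ k * A * Q * |h| ^ γ := by
          gcongr
          · exact one_le_pow₀ (by norm_num)
          · exact Real.one_le_rpow hh hγ.1

theorem abs_apply_rescale_sub_scale_le (hs : 0 < s)
    (hA : ∀ x g, |u (rescale s x g)| ≤ A * schwartzNorm k n g) (hA₀ : 0 ≤ A) (g : 𝓢(ℝ, ℝ)) (x : ℝ)
    {s' : ℝ} (hss' : s ≤ s') (hs' : s' - s ≤ s) :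
    |u (rescale s' x g) - u (rescale s x g)| ≤
      (n + 2) * 4 ^ (k + 1) * A * schwartzNorm (k + 1) (n + 1) g * ((s' - s) / s) := by
  have hτ : s' / s ∈ Set.Icc 1 2 := ⟨(one_le_div hs).2 hss', (div_le_iff₀ hs).2 (by linarith)⟩
  calc |u (rescale s' x g) - u (rescale s x g)|
      = |u (rescale s x (rescale (s' / s) 0 g - g))| := by
        rw [map_sub, map_sub, rescale_rescale, mul_zero, add_zero, mul_div_cancel₀ s' hs.ne']
    _ ≤ A * ((n + 2) * (4 ^ (k + 1) * schwartzNorm (k + 1) (n + 1) g) * (s' / s - 1)) :=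
        (hA x _).trans (by gcongr; exact schwartzNorm_dilate_sub_self_le hτ k n g)
    _ = (n + 2) * 4 ^ (k + 1) * A * schwartzNorm (k + 1) (n + 1) g * ((s' - s) / s) := by
        rw [sub_div, div_self hs.ne']
        ring

end ScalingBound

section HeatKernel

theorem exists_abs_eval_mul_exp_le (p : Polynomial ℝ) :
    ∃ C, ∀ x : ℝ, |p.eval x| * exp (-(x ^ 2 / 2)) ≤ C := by
  induction p using Polynomial.induction_on' with
  | add p q hp hq =>
    obtain ⟨C, hC⟩ := hp
    obtain ⟨C', hC'⟩ := hq
    refine ⟨C + C', fun x => ?_⟩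
    calc |(p + q).eval x| * exp (-(x ^ 2 / 2))
        ≤ (|p.eval x| + |q.eval x|) * exp (-(x ^ 2 / 2)) := by
          rw [Polynomial.eval_add]
          gcongr
          exact abs_add_le _ _
      _ ≤ C + C' := by linarith [hC x, hC' x]
  | monomial n a =>
    refine ⟨|a| * (1 + 2 ^ n * n.factorial), fun x => ?_⟩
    have hpow : |x| ^ n ≤ (1 + 2 ^ n * n.factorial) * exp (x ^ 2 / 2) := by
      have hexp : 1 ≤ exp (x ^ 2 / 2) := Real.one_le_exp (by positivity)
      have hfac := Real.pow_div_factorial_le_exp (x ^ 2 / 2) (by positivity) n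
      rw [div_le_iff₀ (by positivity), div_pow, div_le_iff₀ (by positivity), ← sq_abs, ← pow_mul,
        mul_comm 2 n, pow_mul, sq_abs] at hfac
      nlinarith [sq_nonneg (|x| ^ n - 1)]
    rw [Polynomial.eval_monomial, abs_mul, abs_pow, Real.exp_neg, mul_inv_le_iff₀ (exp_pos _),
      mul_assoc]
    gcongr

/-- The Gaussian `e^{-y²/2}` as a Schwartz function. -/
def gaussianSchwartz : 𝓢(ℝ, ℝ) where
  toFun y := exp (-(y ^ 2 / 2))
  smooth' := by fun_prop
  decay' k n := by
    obtain ⟨C, hC⟩ := exists_abs_eval_mul_exp_le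
      (Polynomial.X ^ k * (Polynomial.hermite n).map (algebraMap ℤ ℝ))
    refine ⟨C, fun x => (hC x).trans_eq' ?_⟩
    rw [norm_iteratedFDeriv_eq_norm_iteratedDeriv, iteratedDeriv_eq_iterate,
      Polynomial.deriv_gaussian_eq_hermite_mul_gaussian]
    simp [Polynomial.aeval_def, Polynomial.eval_map, abs_mul, mul_assoc]

/-- The heat kernel at unit time, `P_1`, as a Schwartz function. -/
def heatProfile : 𝓢(ℝ, ℝ) := (√(2 * π))⁻¹ • rescale √2 0 gaussianSchwartz

/-- The Schwartz function `y ↦ P_t (x - y)`, obtained from `P_1` by parabolic scaling. It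
vanishes for `t ≤ 0`, where `√t = 0`. -/
def heatKernelAt (t x : ℝ) : 𝓢(ℝ, ℝ) := rescale √t x heatProfile

theorem heatKernelAt_apply (t x y : ℝ) : heatKernelAt t x y = heatKernel t (x - y) := by
  simp only [heatKernelAt, heatProfile, map_smul, rescale_rescale, smul_apply, smul_eq_mul,
    rescale_apply, heatKernel]
  split_ifs with ht
  · have hconst : (4 * π * t) ^ (-(1 : ℝ) / 2) = (√(2 * π))⁻¹ * (√t * √2)⁻¹ := by
      rw [neg_div, Real.rpow_neg (by positivity), ← Real.sqrt_eq_rpow, ← mul_inv,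
        ← Real.sqrt_mul ht.le, ← Real.sqrt_mul (by positivity)]
      ring_nf
    have harg : ((√t * √2)⁻¹ * (y - (x + √t * 0))) ^ 2 / 2 = (x - y) ^ 2 / (4 * t) := by
      rw [mul_pow, inv_pow, mul_pow, Real.sq_sqrt ht.le, Real.sq_sqrt zero_le_two]
      field_simp
      ring
    change (√(2 * π))⁻¹ * ((√t * √2)⁻¹ * exp (-(_ ^ 2 / 2))) = _
    rw [harg, hconst, neg_div, mul_assoc]
  · simp [Real.sqrt_eq_zero_of_nonpos (not_lt.1 ht)]

end HeatKernel

section ParabolicWeight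

variable {t : ℝ}

theorem tnorm_of_nonneg (ht : 0 ≤ t) : tnorm t = min √t 1 := by
  rw [tnorm, abs_of_nonneg ht]

theorem tnorm_pos (ht : 0 < t) : 0 < tnorm t := by
  rw [tnorm_of_nonneg ht.le]
  exact lt_min (Real.sqrt_pos.2 ht) one_pos

theorem tnorm_le_sqrt (ht : 0 ≤ t) : tnorm t ≤ √t := by
  rw [tnorm_of_nonneg ht]
  exact min_le_left _ _

theorem tnorm_sq_le (ht : 0 < t) : tnorm t ^ 2 ≤ t :=
  (Real.le_sqrt (tnorm_pos ht).le ht.le).1 (tnorm_le_sqrt ht.le)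

theorem tnorm2_comm (t t' : ℝ) : tnorm2 t t' = tnorm2 t' t := min_comm _ _

theorem tnorm2_of_le (ht : 0 ≤ t) {t' : ℝ} (htt' : t ≤ t') : tnorm2 t t' = tnorm t := by
  rw [tnorm2, tnorm_of_nonneg ht, tnorm_of_nonneg (ht.trans htt')]
  exact min_eq_left (by gcongr)

end ParabolicWeight

section HeatEstimate

variable {u : 𝓢(ℝ, ℝ) →L[ℝ] ℝ} {η γ B t : ℝ} {k n : ℕ}

theorem rpow_mul_div_rpow {a d : ℝ} (ha : 0 < a) (hd : 0 ≤ d) (η γ : ℝ) :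
    a ^ η * (d / a) ^ γ = a ^ (η - γ) * d ^ γ := by
  rw [Real.div_rpow hd ha.le, Real.rpow_sub ha]
  ring

theorem sqrt_sub_sqrt_div_sqrt_le (ht : 0 < t) {t' : ℝ} (htt' : t ≤ t') :
    (√t' - √t) / √t ≤ (t' - t) / t := by
  have hle : √t ≤ √t' := Real.sqrt_le_sqrt htt'
  have hpos : 0 < √t := Real.sqrt_pos.2 ht
  rw [div_le_div_iff₀ hpos ht]
  calc (√t' - √t) * t = (√t' - √t) * √t * √t := by rw [mul_assoc, Real.mul_self_sqrt ht.le]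
    _ ≤ (√t' - √t) * (√t' + √t) * √t := by
        gcongr
        linarith
    _ = (√t' ^ 2 - √t ^ 2) * √t := by ring
    _ = (t' - t) * √t := by rw [Real.sq_sqrt ht.le, Real.sq_sqrt (ht.le.trans htt')]

theorem abs_apply_heatKernelAt_sub_space_le (ht : 0 < t) (hB₀ : 0 ≤ B)
    (hB : ∀ x g, |u (rescale √t x g)| ≤ B * tnorm t ^ η * schwartzNorm k n g)
    (hγ : γ ∈ Set.Icc 0 1) (x x' : ℝ) :
    |u (heatKernelAt t x') - u (heatKernelAt t x)| ≤
      2 * 4 ^ k * B * schwartzNorm k (n + 1) heatProfile *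
        (tnorm t ^ (η - γ) * |x' - x| ^ γ) := by
  have hpos := tnorm_pos ht
  calc |u (heatKernelAt t x') - u (heatKernelAt t x)|
      ≤ 2 * 4 ^ k * (B * tnorm t ^ η) * schwartzNorm k (n + 1) heatProfile *
          (|x' - x| / √t) ^ γ :=
        abs_apply_rescale_sub_center_le (Real.sqrt_pos.2 ht) hB (by positivity) hγ _ _ _
    _ ≤ 2 * 4 ^ k * (B * tnorm t ^ η) * schwartzNorm k (n + 1) heatProfile *
          (|x' - x| / tnorm t) ^ γ := by
        gcongr
        · exact hγ.1
        · exact tnorm_le_sqrt ht.le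
    _ = 2 * 4 ^ k * B * schwartzNorm k (n + 1) heatProfile *
          (tnorm t ^ (η - γ) * |x' - x| ^ γ) := by
        rw [← rpow_mul_div_rpow hpos (abs_nonneg _)]
        ring

theorem abs_apply_heatKernelAt_sub_time_le (ht : 0 < t) (hB₀ : 0 ≤ B)
    (hB : ∀ x g, |u (rescale √t x g)| ≤ B * tnorm t ^ η * schwartzNorm k n g)
    (hγ : γ ≤ 2) (x : ℝ) {t' : ℝ} (htt' : t ≤ t') (hnear : t' - t ≤ tnorm t ^ 2) :
    |u (heatKernelAt t' x) - u (heatKernelAt t x)| ≤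
      (n + 2) * 4 ^ (k + 1) * B * schwartzNorm (k + 1) (n + 1) heatProfile *
        (tnorm t ^ (η - γ) * (t' - t) ^ (γ / 2)) := by
  have hpos := tnorm_pos ht
  have hd : 0 ≤ t' - t := sub_nonneg.2 htt'
  have hrel : (√t' - √t) / √t ≤ (t' - t) / tnorm t ^ 2 :=
    (sqrt_sub_sqrt_div_sqrt_le ht htt').trans (by gcongr; exact tnorm_sq_le ht)
  have hδ : (t' - t) / tnorm t ^ 2 ≤ 1 := (div_le_one (by positivity)).2 hnear
  have hscale : √t' - √t ≤ √t := (div_le_one (Real.sqrt_pos.2 ht)).1 (hrel.trans hδ)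
  have hpow : ((t' - t) / tnorm t ^ 2) ^ (γ / 2) = (√(t' - t) / tnorm t) ^ γ := by
    rw [← Real.sq_sqrt hd, ← div_pow, ← Real.rpow_natCast_mul (by positivity), Real.sq_sqrt hd]
    congr 1
    push_cast
    ring
  have hsqrt : √(t' - t) ^ γ = (t' - t) ^ (γ / 2) := by
    rw [Real.sqrt_eq_rpow, ← Real.rpow_mul hd]
    ring_nf
  calc |u (heatKernelAt t' x) - u (heatKernelAt t x)|
      ≤ (n + 2) * 4 ^ (k + 1) * (B * tnorm t ^ η) * schwartzNorm (k + 1) (n + 1) heatProfile *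
          ((√t' - √t) / √t) :=
        abs_apply_rescale_sub_scale_le (Real.sqrt_pos.2 ht) hB (by positivity) _ x
          (Real.sqrt_le_sqrt htt') hscale
    _ ≤ (n + 2) * 4 ^ (k + 1) * (B * tnorm t ^ η) * schwartzNorm (k + 1) (n + 1) heatProfile *
          ((t' - t) / tnorm t ^ 2) ^ (γ / 2) := by
        gcongr
        exact hrel.trans (Real.self_le_rpow_of_le_one (by positivity) hδ (by linarith))
    _ = (n + 2) * 4 ^ (k + 1) * B * schwartzNorm (k + 1) (n + 1) heatProfile *
          (tnorm t ^ (η - γ) * (t' - t) ^ (γ / 2)) := by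
        rw [hpow, ← hsqrt, ← rpow_mul_div_rpow hpos (Real.sqrt_nonneg _)]
        ring

theorem abs_apply_heatKernelAt_sub_time_le_tnorm2 {T : ℝ} (hB₀ : 0 ≤ B)
    (hB : ∀ t ∈ Set.Ioc 0 T, ∀ x g,
      |u (rescale √t x g)| ≤ B * tnorm t ^ η * schwartzNorm k n g)
    (hγ : γ ≤ 2) (x : ℝ) {t t' : ℝ} (ht : t ∈ Set.Ioc 0 T) (ht' : t' ∈ Set.Ioc 0 T)
    (hnear : |t' - t| ≤ tnorm2 t t' ^ 2) :
    |u (heatKernelAt t' x) - u (heatKernelAt t x)| ≤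
      (n + 2) * 4 ^ (k + 1) * B * schwartzNorm (k + 1) (n + 1) heatProfile *
        (tnorm2 t t' ^ (η - γ) * |t' - t| ^ (γ / 2)) := by
  wlog htt' : t ≤ t' generalizing t t'
  · rw [abs_sub_comm t', tnorm2_comm] at hnear ⊢
    rw [abs_sub_comm]
    exact this ht' ht hnear (le_of_not_ge htt')
  rw [tnorm2_of_le ht.1.le htt', abs_of_nonneg (sub_nonneg.2 htt')] at hnear ⊢
  exact abs_apply_heatKernelAt_sub_time_le ht.1 hB₀ (hB t ht) hγ x htt' hnear

end HeatEstimate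

theorem statement3_general (η T : ℝ) (r : ℕ) {γ : ℝ} (hγ : γ ∈ Set.Icc 0 1) :
    ∃ C > 0, ∀ u M, HasScalingBound η r u M →
      (∀ t ∈ Set.Ioc 0 T, ∀ x, tnorm t ^ (-η) * |u (heatKernelAt t x)| ≤ C * M) ∧
      (∀ t ∈ Set.Ioc 0 T, ∀ x x', |u (heatKernelAt t x') - u (heatKernelAt t x)| ≤
        C * M * (tnorm t ^ (η - γ) * |x' - x| ^ γ)) ∧
      ∀ t ∈ Set.Ioc 0 T, ∀ t' ∈ Set.Ioc 0 T, |t' - t| ≤ tnorm2 t t' ^ 2 → ∀ x,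
        |u (heatKernelAt t' x) - u (heatKernelAt t x)| ≤
          C * M * (tnorm2 t t' ^ (η - γ) * |t' - t| ^ (γ / 2)) := by
  obtain ⟨K, hK, hbound⟩ := exists_forall_hasScalingBound_abs_apply_rescale_le r √T
  set N := schwartzNorm 3 (r + 1) heatProfile
  have : 0 ≤ N := by positivity
  refine ⟨(r + 2) * 4 ^ 3 * K * (N + 1), by positivity, fun u M hu => ?_⟩
  have hM := hu.nonneg
  have size (t : ℝ) (ht : t ∈ Set.Ioc 0 T) (x : ℝ) (g : 𝓢(ℝ, ℝ)) :
      |u (rescale √t x g)| ≤ K * M * tnorm t ^ η * schwartzNorm 2 r g := by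
    rw [tnorm_of_nonneg ht.1.le, mul_assoc K]
    exact hbound η u M hu _ ⟨Real.sqrt_pos.2 ht.1, Real.sqrt_le_sqrt ht.2⟩ x g
  have const_le {c N' : ℝ} (hc : 0 ≤ c) (hcr : c ≤ (r + 2) * 4 ^ 3) (hN' : N' ≤ N) :
      c * (K * M) * N' ≤ (r + 2) * 4 ^ 3 * K * (N + 1) * M := by
    calc c * (K * M) * N' ≤ c * (K * M) * (N + 1) := by
          gcongr
          linarith
      _ ≤ (r + 2) * 4 ^ 3 * (K * M) * (N + 1) := by gcongr
      _ = (r + 2) * 4 ^ 3 * K * (N + 1) * M := by ring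
  have : (0 : ℝ) ≤ r := r.cast_nonneg
  refine ⟨fun t ht x => ?_, fun t ht x x' => ?_, fun t ht t' ht' hnear x => ?_⟩
  · have hpos := Real.rpow_pos_of_pos (tnorm_pos ht.1) η
    rw [Real.rpow_neg (tnorm_pos ht.1).le, inv_mul_le_iff₀ hpos]
    calc |u (heatKernelAt t x)| ≤ tnorm t ^ η * (1 * (K * M) * schwartzNorm 2 r heatProfile) :=
          (size t ht x _).trans_eq (by ring)
      _ ≤ tnorm t ^ η * ((r + 2) * 4 ^ 3 * K * (N + 1) * M) :=
          mul_le_mul_of_nonneg_left (const_le zero_le_one (by linarith)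
            (schwartzNorm_mono (by norm_num) r.le_succ _)) hpos.le
  · have hpos := tnorm_pos ht.1
    exact (abs_apply_heatKernelAt_sub_space_le ht.1 (by positivity) (size t ht) hγ x x').trans
      (mul_le_mul_of_nonneg_right (const_le (by positivity) (by linarith)
        (schwartzNorm_mono (by norm_num) le_rfl _)) (by positivity))
  · have hpos : 0 < tnorm2 t t' := lt_min (tnorm_pos ht.1) (tnorm_pos ht'.1)
    exact (abs_apply_heatKernelAt_sub_time_le_tnorm2 (by positivity) size
      (hγ.2.trans one_le_two) x ht ht' hnear).trans
      (mul_le_mul_of_nonneg_right (const_le (by positivity) le_rfl le_rfl) (by positivity))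

/-- for a `1`-periodic distribution `u₀ ∈ C^η` with `η ∈ (-1,0)`,
the caloric extension `P u₀ (t,x) = ⟨u₀, P_t(x-·)⟩` lies in `C^{γ,s}_{η,T}` for
every `γ ∈ (0,1)`, with norm controlled by `‖u₀‖_{C^η}`.  Here `PK t x` is the
Schwartz function `y ↦ P_t(x-y)` (for `t > 0`), supplied as a hypothesis, and
`M` is any bound for the `C^η`-norm of `u₀`. -/
theorem statement3 (η : ℝ) (hη : η ∈ Set.Ioo (-1 : ℝ) 0) (T : ℝ) (hT : 0 < T)
    (r : ℕ) (hr : 1 ≤ r) (γ : ℝ) (hγ : γ ∈ Set.Ioo (0 : ℝ) 1) :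
    ∃ C : ℝ, 0 < C ∧
      ∀ u₀ : SchwartzMap ℝ ℝ →L[ℝ] ℝ,
        (∀ Φ Φ' : SchwartzMap ℝ ℝ, (∀ y : ℝ, Φ' y = Φ (y - 1)) → u₀ Φ' = u₀ Φ) →
        ∀ M : ℝ, 0 ≤ M →
        (∀ x lam : ℝ, lam ∈ Set.Ioc (0 : ℝ) 1 →
          ∀ φ : ℝ → ℝ, IsTestFunction r φ →
          ∀ Φ : SchwartzMap ℝ ℝ, (∀ y : ℝ, Φ y = lam⁻¹ * φ (lam⁻¹ * (y - x))) →
          lam ^ (-η) * |u₀ Φ| ≤ M) →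
        ∀ PK : ℝ → ℝ → SchwartzMap ℝ ℝ,
        (∀ t x y : ℝ, PK t x y = heatKernel t (x - y)) →
        (∀ t x : ℝ, t ∈ Set.Ioc (0 : ℝ) T →
          tnorm t ^ (-η) * |u₀ (PK t x)| ≤ C * M) ∧
        (∀ t x xb : ℝ, t ∈ Set.Ioc (0 : ℝ) T → x ≠ xb →
          |u₀ (PK t xb) - u₀ (PK t x)| ≤
            C * M * (tnorm t ^ (η - γ) * |xb - x| ^ γ)) ∧
        (∀ x t tb : ℝ, t ∈ Set.Ioc (0 : ℝ) T → tb ∈ Set.Ioc (0 : ℝ) T → t ≠ tb →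
          |tb - t| ≤ tnorm2 t tb ^ 2 →
          |u₀ (PK tb x) - u₀ (PK t x)| ≤
            C * M * (tnorm2 t tb ^ (η - γ) * |tb - t| ^ (γ / 2))) := by
  obtain ⟨C, hC, hbound⟩ := statement3_general η T r ⟨hγ.1.le, hγ.2.le⟩
  refine ⟨C, hC, fun u₀ _ M _ hu PK hPK => ?_⟩
  obtain rfl : PK = heatKernelAt := by
    ext t x y
    rw [hPK, heatKernelAt_apply]
  obtain ⟨hsize, hspace, htime⟩ := hbound u₀ M hu
  exact ⟨fun t x ht => hsize t ht x, fun t x xb ht _ => hspace t ht x xb,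
    fun x t tb ht htb _ hnear => htime t ht tb htb hnear x⟩
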